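/- arXiv:2212.13230 — 2 statements merged into one kernel-verified Lean document; each statement's English description precedes it below -/
import Mathlib

section
/- Let u : ℝ × ℝ → ℝ be smooth and satisfy u_t = u²·u_xx at every point. Then the function Q := u²·(3u_x·u_xx + u·u_xxx) satisfies Q_t = u²·Q_xx + 2u·u_xx·Q at every point; that is, Q is a third-order generalized symmetry characteristic of u_t = u²u_xx. -/
/-- Partial derivative with respect to the first (time) variable. -/
noncomputable def dt (u : ℝ → ℝ → ℝ) (t x : ℝ) : ℝ := deriv (fun s => u s x) t

/-- `n`-th partial derivative with respect to the second (space) variable. -/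
noncomputable def dx (u : ℝ → ℝ → ℝ) (n : ℕ) (t x : ℝ) : ℝ := iteratedDeriv n (u t) x

/-!
Put `w = u² / 2`. If `u_t = u² u_xx`, then `w_t = u³ u_xx`, and the characteristic `Q` has the two
expressions `Q = w_tx` and `Q = u² w_xxx`. Differentiating the second one in time and exchanging
partial derivatives gives `Q_t = 2 u u_t w_xxx + u² w_xxxt = 2 u u_xx Q + u² (w_tx)_xx`, and the
first one turns the last term into `u² Q_xx`.
-/

open Function
open scoped ContDiff

theorem iteratedDeriv_three_sq {𝕜 𝔸 : Type*} [NontriviallyNormedField 𝕜] [NormedCommRing 𝔸]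
    [NormedAlgebra 𝕜 𝔸] {f : 𝕜 → 𝔸} {x : 𝕜} (hf : ContDiffAt 𝕜 3 f x) :
    iteratedDeriv 3 (fun y => f y ^ 2) x =
      2 * (3 * iteratedDeriv 1 f x * iteratedDeriv 2 f x + f x * iteratedDeriv 3 f x) := by
  have sq_eq : (fun y => f y ^ 2) = f * f := funext fun y => sq (f y)
  rw [sq_eq, iteratedDeriv_mul hf hf]
  simp only [Finset.sum_range_succ, Finset.sum_range_zero, iteratedDeriv_zero, Nat.choose,
    Nat.reduceAdd, Nat.reduceSub]
  push_cast
  ring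

theorem fderiv_fderiv_apply_comm {𝕜 E F : Type*} [RCLike 𝕜] [NormedAddCommGroup E]
    [NormedSpace 𝕜 E] [NormedAddCommGroup F] [NormedSpace 𝕜 F] {f : E → F}
    {p : E} (hf : ContDiffAt 𝕜 2 f p) (v w : E) :
    fderiv 𝕜 (fun q => fderiv 𝕜 f q v) p w = fderiv 𝕜 (fun q => fderiv 𝕜 f q w) p v := by
  have hf' : DifferentiableAt 𝕜 (fderiv 𝕜 f) p :=
    (hf.fderiv_right (m := 1) (by norm_num)).differentiableAt one_ne_zero
  have symm : IsSymmSndFDerivAt 𝕜 f p := hf.isSymmSndFDerivAt (by simp)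
  rw [fderiv_clm_apply hf' (by fun_prop), fderiv_clm_apply hf' (by fun_prop)]
  simpa using symm.eq w v

section PartialDerivatives

variable {f : ℝ → ℝ → ℝ}

@[simp]
theorem dx_zero (f : ℝ → ℝ → ℝ) : dx f 0 = f := by
  ext t x
  simp [dx]

theorem dx_dx (f : ℝ → ℝ → ℝ) (m n : ℕ) : dx (dx f m) n = dx f (n + m) := by
  ext t x
  change iteratedDeriv n (iteratedDeriv m (f t)) x = iteratedDeriv (n + m) (f t) x
  simp only [iteratedDeriv_eq_iterate, iterate_add_apply]

theorem hasDerivAt_dx {n : ℕ} {t : ℝ} (hf : ContDiff ℝ (n + 1) (f t)) (x : ℝ) :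
    HasDerivAt (dx f n t) (dx f (n + 1) t x) x := by
  have hd : HasDerivAt (iteratedDeriv n (f t)) _ x :=
    (hf.differentiable_iteratedDeriv' n x).hasDerivAt
  rwa [← iteratedDeriv_succ] at hd

theorem hasDerivAt_dt {t x : ℝ} (hf : DifferentiableAt ℝ (uncurry f) (t, x)) :
    HasDerivAt (fun s => f s x) (dt f t x) t :=
  (hf.comp (f := fun s => (s, x)) t (by fun_prop)).hasDerivAt

theorem dt_eq_fderiv {t x : ℝ} (hf : DifferentiableAt ℝ (uncurry f) (t, x)) :
    dt f t x = fderiv ℝ (uncurry f) (t, x) (1, 0) := by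
  rw [dt]
  exact (hf.hasFDerivAt.comp_hasDerivAt t ((hasDerivAt_id t).prodMk (hasDerivAt_const t x))).deriv

theorem dx_one_eq_fderiv {t x : ℝ} (hf : DifferentiableAt ℝ (uncurry f) (t, x)) :
    dx f 1 t x = fderiv ℝ (uncurry f) (t, x) (0, 1) := by
  rw [dx, iteratedDeriv_one]
  exact (hf.hasFDerivAt.comp_hasDerivAt x ((hasDerivAt_const x t).prodMk (hasDerivAt_id x))).deriv

theorem uncurry_dt (hf : Differentiable ℝ (uncurry f)) :
    uncurry (dt f) = fun p => fderiv ℝ (uncurry f) p (1, 0) :=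
  funext fun p => dt_eq_fderiv (hf p)

theorem uncurry_dx_one (hf : Differentiable ℝ (uncurry f)) :
    uncurry (dx f 1) = fun p => fderiv ℝ (uncurry f) p (0, 1) :=
  funext fun p => dx_one_eq_fderiv (hf p)

theorem contDiff_dt {n : ℕ∞ω} (hf : ContDiff ℝ (n + 1) (uncurry f)) :
    ContDiff ℝ n (uncurry (dt f)) := by
  rw [uncurry_dt (hf.differentiable (by simp))]
  exact (hf.fderiv_right le_rfl).clm_apply contDiff_const

theorem contDiff_dx {n : ℕ∞ω} {k : ℕ} (hf : ContDiff ℝ (n + k) (uncurry f)) :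
    ContDiff ℝ n (uncurry (dx f k)) := by
  induction k generalizing n with
  | zero => simpa using hf
  | succ k ih =>
    have hk : ContDiff ℝ (n + 1) (uncurry (dx f k)) :=
      ih (by simpa only [Nat.cast_succ, add_assoc, add_comm (1 : ℕ∞ω)] using hf)
    rw [add_comm, ← dx_dx, uncurry_dx_one (hk.differentiable (by simp))]
    exact (hk.fderiv_right le_rfl).clm_apply contDiff_const

theorem dt_dx_one (hf : ContDiff ℝ 2 (uncurry f)) : dt (dx f 1) = dx (dt f) 1 := by
  have hf₁ : Differentiable ℝ (uncurry f) := hf.differentiable two_ne_zero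
  have hdx : Differentiable ℝ (uncurry (dx f 1)) :=
    (contDiff_dx (n := 1) (by simpa [one_add_one_eq_two] using hf)).differentiable one_ne_zero
  have hdt : Differentiable ℝ (uncurry (dt f)) :=
    (contDiff_dt (n := 1) (by simpa [one_add_one_eq_two] using hf)).differentiable one_ne_zero
  ext t x
  rw [dt_eq_fderiv (hdx _), dx_one_eq_fderiv (hdt _), uncurry_dx_one hf₁, uncurry_dt hf₁,
    fderiv_fderiv_apply_comm hf.contDiffAt]

theorem dt_dx {n : ℕ} (hf : ContDiff ℝ (n + 1) (uncurry f)) : dt (dx f n) = dx (dt f) n := by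
  induction n with
  | zero => simp
  | succ n ih =>
    have hn : ContDiff ℝ 2 (uncurry (dx f n)) :=
      contDiff_dx (hf.of_le (by push_cast; rw [add_assoc, one_add_one_eq_two, add_comm]))
    rw [add_comm, ← dx_dx, dt_dx_one hn, ih (hf.of_le (by push_cast; exact le_self_add)), dx_dx]

end PartialDerivatives

section Potential

variable {u : ℝ → ℝ → ℝ}

theorem dx_three_sq_div_two {t x : ℝ} (hu : ContDiffAt ℝ 3 (u t) x) :
    dx (fun t x => u t x ^ 2 / 2) 3 t x =
      3 * dx u 1 t x * dx u 2 t x + u t x * dx u 3 t x := by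
  simp only [dx, iteratedDeriv_div_const, iteratedDeriv_three_sq hu]
  ring

theorem dt_sq_div_two {t x : ℝ} (hu : DifferentiableAt ℝ (uncurry u) (t, x)) :
    dt (fun t x => u t x ^ 2 / 2) t x = u t x * dt u t x := by
  rw [dt, (((hasDerivAt_dt hu).fun_pow 2).div_const 2).deriv]
  ring

theorem dx_one_pow_three_mul_dx_two {t : ℝ} (hu : ContDiff ℝ 3 (u t)) (x : ℝ) :
    dx (fun t x => u t x ^ 3 * dx u 2 t x) 1 t x =
      u t x ^ 2 * (3 * dx u 1 t x * dx u 2 t x + u t x * dx u 3 t x) := by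
  have hu₀ : HasDerivAt (u t) (dx u 1 t x) x := by
    simpa using hasDerivAt_dx (n := 0) (hu.of_le (by norm_num)) x
  have hu₂ : HasDerivAt (dx u 2 t) (dx u 3 t x) x := hasDerivAt_dx (by norm_num [hu]) x
  rw [dx, iteratedDeriv_one, ((hu₀.fun_pow 3).fun_mul hu₂).deriv]
  ring

end Potential

theorem stmt_12_general (u : ℝ → ℝ → ℝ) (hu : ContDiff ℝ 4 (uncurry u))
    (heq : ∀ t x, dt u t x = u t x ^ 2 * dx u 2 t x)
    (Q : ℝ → ℝ → ℝ)
    (hQ : ∀ t x, Q t x = u t x ^ 2 * (3 * dx u 1 t x * dx u 2 t x + u t x * dx u 3 t x))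
    (t x : ℝ) :
    dt Q t x = u t x ^ 2 * dx Q 2 t x + 2 * u t x * dx u 2 t x * Q t x := by
  let w : ℝ → ℝ → ℝ := fun t x => u t x ^ 2 / 2
  have hw : ContDiff ℝ 4 (uncurry w) := (hu.pow 2).div_const 2
  have hu_diff : Differentiable ℝ (uncurry u) := hu.differentiable four_ne_zero
  have hu_slice (t : ℝ) : ContDiff ℝ 3 (u t) :=
    (hu.comp (contDiff_prodMk_right t)).of_le (by norm_num)
  have w_t : dt w = fun t x => u t x ^ 3 * dx u 2 t x := by
    ext t x
    rw [dt_sq_div_two (hu_diff _), heq]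
    ring
  have Q_eq_w_tx : Q = dx (dt w) 1 := by
    ext t x
    rw [w_t, dx_one_pow_three_mul_dx_two (hu_slice t), hQ]
  have Q_eq_w_xxx : Q = fun t x => u t x ^ 2 * dx w 3 t x := by
    ext t x
    rw [dx_three_sq_div_two (hu_slice t).contDiffAt, hQ]
  have w_xxxt : dt (dx w 3) = dx Q 2 := by
    rw [dt_dx (by norm_num [hw]), Q_eq_w_tx, dx_dx]
  have hw_xxx : ContDiff ℝ 1 (uncurry (dx w 3)) := contDiff_dx (by norm_num [hw])
  have Q_t : dt Q t x = 2 * u t x * dt u t x * dx w 3 t x + u t x ^ 2 * dt (dx w 3) t x := by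
    rw [Q_eq_w_xxx, dt, (((hasDerivAt_dt (hu_diff (t, x))).fun_pow 2).fun_mul
      (hasDerivAt_dt (hw_xxx.differentiable one_ne_zero (t, x)))).deriv]
    ring
  rw [Q_t, w_xxxt, heq, congrFun₂ Q_eq_w_xxx t x]
  ring

theorem stmt_12 (u : ℝ → ℝ → ℝ) (hu : ContDiff ℝ (⊤ : ℕ∞) fun p : ℝ × ℝ => u p.1 p.2)
    (heq : ∀ t x, dt u t x = (u t x) ^ 2 * dx u 2 t x)
    (Q : ℝ → ℝ → ℝ)
    (hQ : ∀ t x, Q t x = (u t x) ^ 2 * (3 * dx u 1 t x * dx u 2 t x + u t x * dx u 3 t x)) :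
    ∀ t x, dt Q t x = (u t x) ^ 2 * dx Q 2 t x + 2 * u t x * dx u 2 t x * Q t x :=
  stmt_12_general u (mod_cast contDiff_infty.1 hu 4) heq Q hQ
end

section
/- Let k₁ ∈ ℝ, let Φ, B : ℝ → ℝ be smooth with Φ(s) > 0 and Φ′(s) ≠ 0 for all s, and let H : ℝ → ℝ be smooth with H′(s) = B(s)·Φ′(s)/(2·Φ(s)^{3/2}) for all s. Define Ψ : ℝ × ℝ → ℝ by Ψ(s,p) := p·B(s) + (2k₁·Φ(s)^{3/2} − p²·Φ′(s)² + 2p²·Φ(s)·Φ″(s))/(2Φ′(s)). Let u : ℝ × ℝ → ℝ be a smooth function satisfying u_t = Φ(u)·u_xx + Ψ(u, u_x) at every point. Then at every point (t,x): ∂_t[Φ(u)^{−1/2}] = ∂_x[−k₁·x/2 − u_x·Φ′(u)/(2·Φ(u)^{1/2}) − H(u)]. In other words, ρ₋₁ := Φ(u)^{−1/2} is a conserved density with flux σ₋₁ := −k₁x/2 − u_xΦ′(u)/(2√Φ(u)) − H(u). -/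
/-! In terms of `w = Φ(u)` the equation reads `w_t = w w_xx - w_x² / 2 + k₁ w^{3/2} + B(u) w_x`.
Since `w w_xx - w_x² / 2 = 2 w^{3/2} (√w)_xx`, multiplication by `-w^{-3/2} / 2` gives
`(w^{-1/2})_t = -(√w)_xx - k₁ / 2 - H(u)_x`, and the right-hand side is an `x`-derivative. -/

/-- The nonlinearity `Ψ(s, p)` of Case 1 of the classification of `u_t = Φ(u) u_xx + Ψ(u, u_x)`. -/
noncomputable def caseOneNonlinearity (k₁ : ℝ) (Φ B : ℝ → ℝ) (s p : ℝ) : ℝ :=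
  p * B s + (2 * k₁ * Φ s ^ ((3 : ℝ) / 2) - p ^ 2 * (deriv Φ s) ^ 2
    + 2 * p ^ 2 * Φ s * deriv (deriv Φ) s) / (2 * deriv Φ s)

/-- The first canonical conserved density `ρ₋₁ = Φ(u)^{-1/2}`. -/
noncomputable def canonicalDensity (Φ : ℝ → ℝ) (u : ℝ → ℝ → ℝ) (t x : ℝ) : ℝ :=
  Φ (u t x) ^ (-(1 : ℝ) / 2)

/-- The flux `σ₋₁` of `canonicalDensity`, where `H` stands for an antiderivative of
`B Φ' / (2 Φ^{3/2})`. -/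
noncomputable def canonicalFlux (k₁ : ℝ) (Φ H : ℝ → ℝ) (u : ℝ → ℝ → ℝ) (t x : ℝ) : ℝ :=
  -(k₁ * x) / 2 - dx u 1 t x * deriv Φ (u t x) / (2 * √(Φ (u t x))) - H (u t x)

theorem dx_one (u : ℝ → ℝ → ℝ) (t x : ℝ) : dx u 1 t x = deriv (u t) x := by
  rw [dx, iteratedDeriv_one]

theorem dx_two (u : ℝ → ℝ → ℝ) (t x : ℝ) : dx u 2 t x = deriv (deriv (u t)) x := by
  rw [dx, iteratedDeriv_succ, iteratedDeriv_one]

theorem hasDerivAt_rpow_neg_half {w : ℝ → ℝ} {w' t : ℝ} (hw : HasDerivAt w w' t)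
    (hpos : 0 < w t) :
    HasDerivAt (fun s => w s ^ (-(1 : ℝ) / 2)) (-w' / (2 * w t ^ ((3 : ℝ) / 2))) t := by
  refine (hw.rpow_const (Or.inl hpos.ne')).congr_deriv ?_
  rw [show -(1 : ℝ) / 2 - 1 = -(3 / 2) by norm_num, Real.rpow_neg hpos.le]
  ring

theorem hasDerivAt_div_two_mul_sqrt {g w : ℝ → ℝ} {g' w' x : ℝ} (hg : HasDerivAt g g' x)
    (hw : HasDerivAt w w' x) (hpos : 0 < w x) :
    HasDerivAt (fun y => g y / (2 * √(w y)))
      ((w x * g' - g x * w' / 2) / (2 * w x ^ ((3 : ℝ) / 2))) x := by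
  have hsqrt : √(w x) ≠ 0 := (Real.sqrt_pos.mpr hpos).ne'
  refine (hg.div ((hw.sqrt hpos.ne').const_mul 2)
    (mul_ne_zero two_ne_zero hsqrt)).congr_deriv ?_
  rw [Real.rpow_div_two_eq_sqrt 3 hpos.le, Real.rpow_ofNat]
  field_simp
  linear_combination 2 * g' * Real.sq_sqrt hpos.le

theorem hasDerivAt_canonicalDensity {Φ : ℝ → ℝ} {u : ℝ → ℝ → ℝ} {t x : ℝ}
    (hu : DifferentiableAt ℝ (fun s => u s x) t) (hΦ : DifferentiableAt ℝ Φ (u t x))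
    (hpos : 0 < Φ (u t x)) :
    HasDerivAt (fun s => canonicalDensity Φ u s x)
      (-(deriv Φ (u t x) * dt u t x) / (2 * Φ (u t x) ^ ((3 : ℝ) / 2))) t :=
  hasDerivAt_rpow_neg_half (hΦ.hasDerivAt.comp t hu.hasDerivAt) hpos

theorem hasDerivAt_canonicalFlux (k₁ : ℝ) {Φ H : ℝ → ℝ} {H' : ℝ} {u : ℝ → ℝ → ℝ} {t x : ℝ}
    (hux : DifferentiableAt ℝ (u t) x) (huxx : DifferentiableAt ℝ (deriv (u t)) x)
    (hΦ : DifferentiableAt ℝ Φ (u t x)) (hΦ' : DifferentiableAt ℝ (deriv Φ) (u t x))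
    (hpos : 0 < Φ (u t x)) (hH : HasDerivAt H H' (u t x)) :
    HasDerivAt (canonicalFlux k₁ Φ H u t)
      (-k₁ / 2
        - (Φ (u t x) * (deriv Φ (u t x) * dx u 2 t x + dx u 1 t x ^ 2 * deriv (deriv Φ) (u t x))
            - (dx u 1 t x * deriv Φ (u t x)) ^ 2 / 2) / (2 * Φ (u t x) ^ ((3 : ℝ) / 2))
        - H' * dx u 1 t x) x := by
  have hw : HasDerivAt (fun y => Φ (u t y)) (deriv Φ (u t x) * deriv (u t) x) x :=
    hΦ.hasDerivAt.comp x hux.hasDerivAt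
  have hwx : HasDerivAt (fun y => deriv (u t) y * deriv Φ (u t y))
      (deriv (deriv (u t)) x * deriv Φ (u t x)
        + deriv (u t) x * (deriv (deriv Φ) (u t x) * deriv (u t) x)) x :=
    huxx.hasDerivAt.mul (hΦ'.hasDerivAt.comp x hux.hasDerivAt)
  have hlin : HasDerivAt (fun y => -(k₁ * y) / 2) (-k₁ / 2) x := by
    simpa using ((hasDerivAt_id x).const_mul k₁).neg.div_const 2
  unfold canonicalFlux
  simp only [dx_one, dx_two]
  refine ((hlin.sub (hasDerivAt_div_two_mul_sqrt hwx hw hpos)).sub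
    (hH.comp x hux.hasDerivAt)).congr_deriv ?_
  ring

-- The equation for `w = Φ(u)`: here `q = u_xx`, `w_x = p Φ'` and `w_xx = q Φ' + p² Φ''`.
theorem deriv_mul_caseOneNonlinearity (k₁ : ℝ) {Φ : ℝ → ℝ} (B : ℝ → ℝ) {s : ℝ}
    (hΦ' : deriv Φ s ≠ 0) (p q : ℝ) :
    deriv Φ s * (Φ s * q + caseOneNonlinearity k₁ Φ B s p) =
      Φ s * (deriv Φ s * q + p ^ 2 * deriv (deriv Φ) s) - (p * deriv Φ s) ^ 2 / 2
        + k₁ * Φ s ^ ((3 : ℝ) / 2) + B s * (p * deriv Φ s) := by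
  unfold caseOneNonlinearity
  field_simp
  ring

theorem stmt_16_general {k₁ : ℝ} {Φ B H : ℝ → ℝ} {u : ℝ → ℝ → ℝ} {t x : ℝ}
    (hut : DifferentiableAt ℝ (fun s => u s x) t)
    (hux : DifferentiableAt ℝ (u t) x) (huxx : DifferentiableAt ℝ (deriv (u t)) x)
    (hΦ : DifferentiableAt ℝ (deriv Φ) (u t x))
    (hpos : 0 < Φ (u t x)) (hΦ' : deriv Φ (u t x) ≠ 0)
    (hH : HasDerivAt H (B (u t x) * deriv Φ (u t x) / (2 * Φ (u t x) ^ ((3 : ℝ) / 2))) (u t x))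
    (heq : dt u t x =
      Φ (u t x) * dx u 2 t x + caseOneNonlinearity k₁ Φ B (u t x) (dx u 1 t x)) :
    ∃ c, HasDerivAt (fun s => canonicalDensity Φ u s x) c t ∧
      HasDerivAt (canonicalFlux k₁ Φ H u t) c x := by
  have hΦdiff : DifferentiableAt ℝ Φ (u t x) := differentiableAt_of_deriv_ne_zero hΦ'
  refine ⟨_, hasDerivAt_canonicalDensity hut hΦdiff hpos, ?_⟩
  refine (hasDerivAt_canonicalFlux k₁ hux huxx hΦdiff hΦ hpos hH).congr_deriv ?_
  rw [heq, deriv_mul_caseOneNonlinearity k₁ B hΦ']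
  have hpow : Φ (u t x) ^ ((3 : ℝ) / 2) ≠ 0 := (Real.rpow_pos_of_pos hpos _).ne'
  field_simp
  ring

theorem stmt_16 (k₁ : ℝ) (Φ B : ℝ → ℝ) (hΦ : ContDiff ℝ (⊤ : ℕ∞) Φ) (hB : ContDiff ℝ (⊤ : ℕ∞) B)
    (hΦpos : ∀ s, Φ s > 0) (hΦ' : ∀ s, deriv Φ s ≠ 0)
    (H : ℝ → ℝ) (hH : ContDiff ℝ (⊤ : ℕ∞) H)
    (hH' : ∀ s, deriv H s = B s * deriv Φ s / (2 * Φ s ^ ((3 : ℝ) / 2)))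
    (Ψ : ℝ → ℝ → ℝ)
    (hΨ : ∀ s p, Ψ s p = p * B s +
      (2 * k₁ * Φ s ^ ((3 : ℝ) / 2) - p ^ 2 * (deriv Φ s) ^ 2
        + 2 * p ^ 2 * Φ s * deriv (deriv Φ) s) / (2 * deriv Φ s))
    (u : ℝ → ℝ → ℝ) (hu : ContDiff ℝ (⊤ : ℕ∞) fun p : ℝ × ℝ => u p.1 p.2)
    (heq : ∀ t x, dt u t x = Φ (u t x) * dx u 2 t x + Ψ (u t x) (dx u 1 t x)) :
    ∀ t x, deriv (fun s => Φ (u s x) ^ (-(1 : ℝ) / 2)) t =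
      deriv (fun y => -(k₁ * y) / 2
        - dx u 1 t y * deriv Φ (u t y) / (2 * Real.sqrt (Φ (u t y)))
        - H (u t y)) x := by
  intro t x
  have hut : ContDiff ℝ (⊤ : ℕ∞) (fun s => u s x) := hu.comp (contDiff_id.prodMk contDiff_const)
  have hux : ContDiff ℝ (⊤ : ℕ∞) (u t) := hu.comp (contDiff_const.prodMk contDiff_id)
  have hΦdd : Differentiable ℝ (deriv Φ) := (contDiff_infty.mp hΦ 2).differentiable_deriv_two
  have huxx : Differentiable ℝ (deriv (u t)) := (contDiff_infty.mp hux 2).differentiable_deriv_two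
  have hHderiv : HasDerivAt H _ (u t x) := hH' (u t x) ▸ (hH.differentiable (by simp) _).hasDerivAt
  have hcase : dt u t x =
      Φ (u t x) * dx u 2 t x + caseOneNonlinearity k₁ Φ B (u t x) (dx u 1 t x) :=
    (heq t x).trans (congrArg _ (hΨ _ _))
  obtain ⟨c, hρ, hσ⟩ := stmt_16_general (hut.differentiable (by simp) t)
    (hux.differentiable (by simp) x) (huxx x) (hΦdd _) (hΦpos _) (hΦ' _) hHderiv hcase
  exact hρ.deriv.trans hσ.deriv.symm
end
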